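/- Let A be a unital C*-algebra over ℂ. Then A is weakly central if and only if, for every maximal ideal N of the center Z(A), the quotient of A by the closed two-sided ideal of A generated by N has exactly one maximal (closed) two-sided ideal. -/

import Mathlib

/- Basic notions about (closed) two-sided ideals of a topological ring,
   weak centrality, and closed ideals generated by a set. -/

section Defs
variable {R : Type*}

/-- A two-sided ring ideal, as a subset of `R`. -/
def IsIdealSet [NonUnitalNonAssocRing R] (S : Set R) : Prop :=
  (0 : R) ∈ S ∧ (∀ x ∈ S, ∀ y ∈ S, x + y ∈ S) ∧ (∀ x ∈ S, -x ∈ S) ∧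
    ∀ x ∈ S, ∀ a : R, a * x ∈ S ∧ x * a ∈ S

/-- A closed two-sided ideal of a topological ring. -/
def IsClosedIdealSet [NonUnitalNonAssocRing R] [TopologicalSpace R] (S : Set R) : Prop :=
  IsIdealSet S ∧ IsClosed S

/-- A maximal (proper) closed two-sided ideal of a topological ring. -/
def IsMaxClosedIdealSet [NonUnitalNonAssocRing R] [TopologicalSpace R] (S : Set R) : Prop :=
  IsClosedIdealSet S ∧ S ≠ Set.univ ∧
    ∀ T : Set R, IsClosedIdealSet T → S ⊆ T → T = S ∨ T = Set.univ

/-- A maximal (proper) two-sided ideal (no closedness requirement). -/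
def IsMaxIdealSet [NonUnitalNonAssocRing R] (S : Set R) : Prop :=
  IsIdealSet S ∧ S ≠ Set.univ ∧
    ∀ T : Set R, IsIdealSet T → S ⊆ T → T = S ∨ T = Set.univ

/-- The center of `R`, as a set. -/
def centerSet (R : Type*) [Mul R] : Set R := {z : R | ∀ a : R, z * a = a * z}

/-- A topological ring is weakly central if no maximal closed two-sided ideal contains the
center, and the map `M ↦ M ∩ Z(R)` is injective on maximal closed two-sided ideals. -/
def WeaklyCentral (R : Type*) [NonUnitalNonAssocRing R] [TopologicalSpace R] : Prop :=
  (∀ M : Set R, IsMaxClosedIdealSet M → ¬ centerSet R ⊆ M) ∧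
    ∀ M N : Set R, IsMaxClosedIdealSet M → IsMaxClosedIdealSet N →
      M ∩ centerSet R = N ∩ centerSet R → M = N

/-- The closed two-sided ideal generated by a set `S`. -/
def closedIdealGen [NonUnitalNonAssocRing R] [TopologicalSpace R] (S : Set R) : Set R :=
  ⋂₀ {T : Set R | IsClosedIdealSet T ∧ S ⊆ T}

end Defs

/-! For a maximal ideal `N` of the center `Z`, let `J` be the ideal of those `a : A` killed by some
central element outside `N`. It is proper, so it lies in a maximal ideal of `A`. Conversely, a
maximal ideal `M` of `A` is prime with respect to central factors, so `M ∩ Z ⊆ N` forces `J ⊆ M`.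
By Gelfand duality `Z` is an algebra of continuous functions, in which every function vanishing at a
point is a uniform limit of functions vanishing near that point; hence a closed ideal containing `J`
contains `N`. Therefore `M ↦ M ∩ Z` maps the maximal ideals of `A` onto those of `Z`, with fiber
over `N` the maximal ideals of `A` containing `N`, and weak centrality is the injectivity of this
map. -/

section GermKernel

variable {B : Type*} [CommRing B]

/-- The kernel of the localization map `M → M_P` at a prime ideal `P`. When `B` is a ring of
functions and `P` is the ideal of a point `x`, this consists of the elements of `M` whose germ at
`x` is zero. -/
abbrev germKernel (P : Ideal B) [P.IsPrime] (M : Type*) [AddCommGroup M] [Module B M] :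
    Submodule B M :=
  Submodule.torsion' B M P.primeCompl

theorem mem_germKernel_iff {M : Type*} [AddCommGroup M] [Module B M] {P : Ideal B} [P.IsPrime]
    {m : M} : m ∈ germKernel P M ↔ ∃ s ∉ P, s • m = 0 := by
  simp only [Submodule.mem_torsion'_iff, Subtype.exists, Submonoid.mk_smul, exists_prop,
    Ideal.mem_primeCompl_iff]

/-- Strong regularity of a commutative topological ring, in the sense used for commutative Banach
algebras: every element vanishing at a point of the maximal spectrum is a limit of elements
vanishing near that point. -/
def IsStronglyRegular (B : Type*) [CommRing B] [TopologicalSpace B] : Prop :=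
  ∀ (N : Ideal B) [N.IsMaximal], (N : Set B) ⊆ closure (germKernel N B)

end GermKernel

-- `g` moves each value of `f` radially towards `0` by `ε`, stopping at `0`; `s = max 0 (ε - ‖f‖)`
-- is supported where that makes `g` vanish.
theorem exists_continuousMap_mul_eq_zero_norm_sub_le {X 𝕜 : Type*} [TopologicalSpace X]
    [CompactSpace X] [RCLike 𝕜] (f : C(X, 𝕜)) {ε : ℝ} (hε : 0 < ε) :
    ∃ s g : C(X, 𝕜), s * g = 0 ∧ ‖f - g‖ ≤ ε ∧ ∀ x, f x = 0 → s x ≠ 0 := by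
  have hmax (x : X) : 0 < max ε ‖f x‖ := lt_max_of_lt_left hε
  let s : C(X, 𝕜) := ⟨fun x ↦ ((max 0 (ε - ‖f x‖) : ℝ) : 𝕜), by fun_prop⟩
  let g : C(X, 𝕜) := ⟨fun x ↦ f x - (ε / max ε ‖f x‖) • f x, by
    fun_prop (disch := exact fun x ↦ (hmax x).ne')⟩
  refine ⟨s, g, ?_, ?_, fun x hx ↦ ?_⟩
  · ext x
    rcases le_total ‖f x‖ ε with hx | hx
    · simp [g, max_eq_left hx, hε.ne']
    · simp [s, max_eq_left (sub_nonpos.2 hx)]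
  · refine (ContinuousMap.norm_le _ hε.le).2 fun x ↦ ?_
    calc ‖(f - g) x‖ = ε / max ε ‖f x‖ * ‖f x‖ := by
          simp [g, norm_smul, abs_of_pos hε, abs_of_pos (hmax x)]
      _ = ε * (‖f x‖ / max ε ‖f x‖) := by ring
      _ ≤ ε := mul_le_of_le_one_right hε.le (div_le_one_of_le₀ (le_max_right _ _) (hmax x).le)
  · simp [s, hx, hε.le, hε.ne']

theorem isStronglyRegular_of_commCStarAlgebra (B : Type*) [CommCStarAlgebra B] :
    IsStronglyRegular B := by
  intro N _ z hz
  let χ := N.toCharacterSpace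
  let Γ := gelfandStarTransform B
  have hΓ (b : B) : ‖Γ b‖ = ‖b‖ :=
    (gelfandTransform_isometry B).norm_map_of_map_zero (map_zero _) b
  refine Metric.mem_closure_iff.2 fun ε hε ↦ ?_
  obtain ⟨s, g, hsg, hg, hs⟩ := exists_continuousMap_mul_eq_zero_norm_sub_le (Γ z) (half_pos hε)
  refine ⟨Γ.symm g, mem_germKernel_iff.2 ⟨Γ.symm s, fun hsN ↦ ?_, ?_⟩, ?_⟩
  · have hχs : Γ (Γ.symm s) χ = 0 := N.toCharacterSpace_apply_eq_zero_of_mem hsN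
    rw [Γ.apply_symm_apply] at hχs
    exact hs χ (N.toCharacterSpace_apply_eq_zero_of_mem hz) hχs
  · rw [smul_eq_mul, ← map_mul, hsg, map_zero]
  · calc dist z (Γ.symm g) = ‖Γ z - g‖ := by
          rw [dist_eq_norm, ← hΓ, map_sub, Γ.apply_symm_apply]
      _ < ε := hg.trans_lt (half_lt_self hε)

section IdealSets

variable {A : Type*} [Ring A]

namespace IsIdealSet

theorem eq_univ_iff_one_mem {S : Set A} (hS : IsIdealSet S) : S = Set.univ ↔ (1 : A) ∈ S :=
  ⟨fun h ↦ h ▸ Set.mem_univ _, fun h ↦ Set.eq_univ_of_forall fun a ↦ by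
    simpa using (hS.2.2.2 1 h a).1⟩

theorem sUnion {c : Set (Set A)} (hc : ∀ S ∈ c, IsIdealSet S) (hchain : IsChain (· ⊆ ·) c)
    (hne : c.Nonempty) : IsIdealSet (⋃₀ c) := by
  obtain ⟨S₀, hS₀⟩ := hne
  refine ⟨⟨S₀, hS₀, (hc S₀ hS₀).1⟩, ?_, ?_, ?_⟩
  · rintro x ⟨S, hS, hx⟩ y ⟨T, hT, hy⟩
    rcases hchain.total hS hT with hST | hTS
    · exact ⟨T, hT, (hc T hT).2.1 x (hST hx) y hy⟩
    · exact ⟨S, hS, (hc S hS).2.1 x hx y (hTS hy)⟩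
  · rintro x ⟨S, hS, hx⟩
    exact ⟨S, hS, (hc S hS).2.2.1 x hx⟩
  · rintro x ⟨S, hS, hx⟩ a
    exact ⟨⟨S, hS, ((hc S hS).2.2.2 x hx a).1⟩, ⟨S, hS, ((hc S hS).2.2.2 x hx a).2⟩⟩

variable [TopologicalSpace A]

theorem one_mem_of_one_mem_closure [IsOpenUnits A] {S : Set A} (hS : IsIdealSet S)
    (h : (1 : A) ∈ closure S) : (1 : A) ∈ S := by
  obtain ⟨_, ⟨u, rfl⟩, hu⟩ := mem_closure_iff.1 h _
    IsOpenUnits.isOpenEmbedding_unitsVal.isOpen_range ⟨1, Units.val_one⟩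
  simpa using (hS.2.2.2 u hu (↑u⁻¹ : A)).1

variable [IsTopologicalRing A]

theorem closure {S : Set A} (hS : IsIdealSet S) : IsIdealSet (closure S) := by
  obtain ⟨hzero, hadd, hneg, hmul⟩ := hS
  refine ⟨subset_closure hzero, fun x hx y hy ↦ map_mem_closure₂ continuous_add hx hy hadd,
    fun x hx ↦ map_mem_closure continuous_neg hx hneg, fun x hx a ↦ ⟨?_, ?_⟩⟩
  · exact map_mem_closure (continuous_const_mul a) hx fun y hy ↦ (hmul y hy a).1
  · exact map_mem_closure (f := (· * a)) (continuous_mul_const a) hx fun y hy ↦ (hmul y hy a).2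

theorem exists_isMaxClosedIdealSet_superset [IsOpenUnits A] {I : Set A} (hI : IsIdealSet I)
    (hone : (1 : A) ∉ I) : ∃ M, IsMaxClosedIdealSet M ∧ I ⊆ M := by
  let proper : Set (Set A) := {T | IsIdealSet T ∧ (1 : A) ∉ T}
  have hchains : ∀ c ⊆ proper, IsChain (· ⊆ ·) c → c.Nonempty → ∃ U ∈ proper, ∀ T ∈ c, T ⊆ U :=
    fun c hc hchain hne ↦ ⟨⋃₀ c, ⟨sUnion (fun T hT ↦ (hc hT).1) hchain hne,
      fun ⟨T, hT, h⟩ ↦ (hc hT).2 h⟩, fun _ ↦ Set.subset_sUnion_of_mem⟩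
  obtain ⟨M, hIM, hM⟩ := zorn_subset_nonempty proper hchains I ⟨hI, hone⟩
  obtain ⟨hMideal, hMone⟩ := hM.prop
  have hMclosed : IsClosed M := closure_eq_iff_isClosed.1 <| hM.eq_of_superset
    ⟨hMideal.closure, fun h ↦ hMone (hMideal.one_mem_of_one_mem_closure h)⟩ subset_closure
  have hMmax (T : Set A) (hT : IsClosedIdealSet T) (hMT : M ⊆ T) : T = M ∨ T = Set.univ :=
    or_iff_not_imp_right.2 fun hne ↦
      hM.eq_of_superset ⟨hT.1, hT.1.eq_univ_iff_one_mem.not.1 hne⟩ hMT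
  exact ⟨M, ⟨⟨hMideal, hMclosed⟩, hMideal.eq_univ_iff_one_mem.not.2 hMone, hMmax⟩, hIM⟩

end IsIdealSet

theorem closedIdealGen_subset_iff [TopologicalSpace A] {S T : Set A} (hT : IsClosedIdealSet T) :
    closedIdealGen S ⊆ T ↔ S ⊆ T :=
  ⟨fun h _ hx ↦ h fun _ hU ↦ hU.2 hx, fun h _ hx ↦ hx T ⟨hT, h⟩⟩

theorem IsClosedIdealSet.colon_center [TopologicalSpace A] [IsTopologicalRing A] {M : Set A}
    (hM : IsClosedIdealSet M) {c : A} (hc : c ∈ centerSet A) :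
    IsClosedIdealSet {x | c * x ∈ M} := by
  obtain ⟨⟨hzero, hadd, hneg, hmul⟩, hclosed⟩ := hM
  refine ⟨⟨by simpa using hzero, fun x hx y hy ↦ ?_, fun x hx ↦ ?_, fun x hx a ↦ ⟨?_, ?_⟩⟩,
    hclosed.preimage (continuous_const_mul c)⟩
  · simpa [mul_add] using hadd _ hx _ hy
  · simpa using hneg _ hx
  · simpa [← mul_assoc, hc a] using (hmul _ hx a).1
  · simpa [mul_assoc] using (hmul _ hx a).2

namespace IsMaxClosedIdealSet

variable [TopologicalSpace A] {M : Set A}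

theorem one_notMem (hM : IsMaxClosedIdealSet M) : (1 : A) ∉ M :=
  hM.1.1.eq_univ_iff_one_mem.not.1 hM.2.1

theorem mem_or_mem_of_center_mul_mem [IsTopologicalRing A] (hM : IsMaxClosedIdealSet M) {c a : A}
    (hc : c ∈ centerSet A) (h : c * a ∈ M) : c ∈ M ∨ a ∈ M := by
  have hcolon := hM.1.colon_center hc
  rcases hM.2.2 _ hcolon fun x hx ↦ (hM.1.1.2.2.2 x hx c).1 with heq | huniv
  · exact .inr (heq ▸ h)
  · exact .inl (by simpa using hcolon.1.eq_univ_iff_one_mem.1 huniv)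

end IsMaxClosedIdealSet

end IdealSets

section CentralTrace

variable {𝕜 A : Type*} [CommRing 𝕜] [Ring A] [Algebra 𝕜 A]

theorem mem_centerSet_iff {a : A} : a ∈ centerSet A ↔ a ∈ Subalgebra.center 𝕜 A := by
  simp only [centerSet, Set.mem_ofPred_eq, Subalgebra.mem_center_iff, eq_comm]

theorem mem_germKernel_center_iff {P : Ideal (Subalgebra.center 𝕜 A)} [P.IsPrime] {a : A} :
    a ∈ germKernel P A ↔ ∃ s ∉ P, (s : A) * a = 0 :=
  mem_germKernel_iff

theorem isIdealSet_germKernel_center (P : Ideal (Subalgebra.center 𝕜 A)) [P.IsPrime] :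
    IsIdealSet (germKernel P A : Set A) := by
  refine ⟨zero_mem _, fun x hx y hy ↦ add_mem hx hy, fun x hx ↦ neg_mem hx, fun x hx a ↦ ?_⟩
  obtain ⟨s, hs, hsx⟩ := mem_germKernel_center_iff.1 hx
  have hsa : (s : A) * a = a * s := (Subalgebra.mem_center_iff.1 s.2 a).symm
  exact ⟨mem_germKernel_center_iff.2 ⟨s, hs, by rw [← mul_assoc, hsa, mul_assoc, hsx, mul_zero]⟩,
    mem_germKernel_center_iff.2 ⟨s, hs, by rw [← mul_assoc, hsx, zero_mul]⟩⟩

theorem one_notMem_germKernel_center (P : Ideal (Subalgebra.center 𝕜 A)) [P.IsPrime] :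
    (1 : A) ∉ germKernel P A := fun h ↦ by
  obtain ⟨s, hs, hs1⟩ := mem_germKernel_center_iff.1 h
  have hzero : s = 0 := Subtype.ext (by simpa using hs1)
  exact hs (hzero ▸ P.zero_mem)

/-- The intersection of a two-sided ideal of `A` with the center, as an ideal of the center. -/
def IsIdealSet.centralTrace (𝕜 : Type*) [CommRing 𝕜] [Algebra 𝕜 A] {S : Set A}
    (hS : IsIdealSet S) : Ideal (Subalgebra.center 𝕜 A) where
  carrier := {z | (z : A) ∈ S}
  zero_mem' := hS.1
  add_mem' {x y} hx hy := hS.2.1 x hx y hy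
  smul_mem' c x hx := (hS.2.2.2 x hx c).1

theorem IsIdealSet.centralTrace_eq_iff {S T : Set A} (hS : IsIdealSet S) (hT : IsIdealSet T) :
    hS.centralTrace 𝕜 = hT.centralTrace 𝕜 ↔ S ∩ centerSet A = T ∩ centerSet A := by
  simp only [Ideal.ext_iff, Subtype.forall, Set.ext_iff, Set.mem_inter_iff, and_congr_left_iff,
    mem_centerSet_iff (𝕜 := 𝕜)]
  rfl

variable [TopologicalSpace A]

theorem closedIdealGen_center_subset_iff {S : Set A} (hS : IsClosedIdealSet S)
    (N : Ideal (Subalgebra.center 𝕜 A)) :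
    closedIdealGen ((fun z : Subalgebra.center 𝕜 A ↦ (z : A)) '' N) ⊆ S ↔
      N ≤ hS.1.centralTrace 𝕜 :=
  (closedIdealGen_subset_iff hS).trans Set.image_subset_iff

theorem IsMaxClosedIdealSet.centralTrace_ne_top {M : Set A} (hM : IsMaxClosedIdealSet M) :
    hM.1.1.centralTrace 𝕜 ≠ ⊤ :=
  (Ideal.ne_top_iff_one _).2 hM.one_notMem

theorem IsStronglyRegular.le_centralTrace (hZ : IsStronglyRegular (Subalgebra.center 𝕜 A))
    {S : Set A} (hS : IsClosedIdealSet S) {N : Ideal (Subalgebra.center 𝕜 A)} [N.IsMaximal]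
    (h : (germKernel N A : Set A) ⊆ S) : N ≤ hS.1.centralTrace 𝕜 := by
  refine (hZ N).trans (closure_minimal (fun z hz ↦ h ?_) (hS.2.preimage continuous_subtype_val))
  obtain ⟨s, hs, hsz⟩ := mem_germKernel_iff.1 hz
  exact mem_germKernel_center_iff.2 ⟨s, hs, congrArg Subtype.val hsz⟩

variable [IsTopologicalRing A]

theorem IsMaxClosedIdealSet.germKernel_subset {M : Set A} (hM : IsMaxClosedIdealSet M)
    {P : Ideal (Subalgebra.center 𝕜 A)} [P.IsPrime] (hP : hM.1.1.centralTrace 𝕜 ≤ P) :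
    (germKernel P A : Set A) ⊆ M := by
  intro a ha
  obtain ⟨s, hs, hsa⟩ := mem_germKernel_center_iff.1 ha
  have hsM : (s : A) * a ∈ M := hsa ▸ hM.1.1.1
  exact (hM.mem_or_mem_of_center_mul_mem (mem_centerSet_iff.2 s.2) hsM).resolve_left
    fun hs' ↦ hs (hP hs')

namespace IsStronglyRegular

theorem isMaximal_centralTrace (hZ : IsStronglyRegular (Subalgebra.center 𝕜 A)) {M : Set A}
    (hM : IsMaxClosedIdealSet M) : (hM.1.1.centralTrace 𝕜).IsMaximal := by
  obtain ⟨N, hN, hle⟩ := Ideal.exists_le_maximal _ (hM.centralTrace_ne_top (𝕜 := 𝕜))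
  have hge : N ≤ hM.1.1.centralTrace 𝕜 := hZ.le_centralTrace hM.1 (hM.germKernel_subset hle)
  exact le_antisymm hle hge ▸ hN

theorem exists_isMaxClosedIdealSet_centralTrace_eq [IsOpenUnits A]
    (hZ : IsStronglyRegular (Subalgebra.center 𝕜 A)) (N : Ideal (Subalgebra.center 𝕜 A))
    [hN : N.IsMaximal] : ∃ (M : Set A) (hM : IsMaxClosedIdealSet M),
      hM.1.1.centralTrace 𝕜 = N := by
  obtain ⟨M, hM, hNM⟩ := (isIdealSet_germKernel_center N).exists_isMaxClosedIdealSet_superset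
    (one_notMem_germKernel_center N)
  exact ⟨M, hM, (hN.eq_of_le hM.centralTrace_ne_top (hZ.le_centralTrace hM.1 hNM)).symm⟩

end IsStronglyRegular

end CentralTrace

theorem isStronglyRegular_center (A : Type*) [CStarAlgebra A] :
    IsStronglyRegular (Subalgebra.center ℂ A) := by
  let Z : StarSubalgebra ℂ A := { Subalgebra.center ℂ A with star_mem' := Set.star_mem_center }
  have : IsClosed (Z : Set A) := by
    rw [show (Z : Set A) = Set.centralizer Set.univ from (Set.centralizer_univ A).symm]
    exact Set.isClosed_centralizer Set.univ
  let _ : CommCStarAlgebra Z :=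
    { StarSubalgebra.cstarAlgebra Z with mul_comm := mul_comm (G := Subalgebra.center ℂ A) }
  exact isStronglyRegular_of_commCStarAlgebra Z

theorem weaklyCentral_iff_quotient_by_central_maximal_has_unique_maximal_general
    {𝕜 A : Type*} [CommRing 𝕜] [Ring A] [Algebra 𝕜 A] [TopologicalSpace A] [IsTopologicalRing A]
    [IsOpenUnits A] (hZ : IsStronglyRegular (Subalgebra.center 𝕜 A)) :
    WeaklyCentral A ↔
      ∀ N : Ideal (Subalgebra.center 𝕜 A), N.IsMaximal →
        ∃! M : Set A, IsMaxClosedIdealSet M ∧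
          closedIdealGen ((fun z : Subalgebra.center 𝕜 A ↦ (z : A)) ''
            (N : Set (Subalgebra.center 𝕜 A))) ⊆ M := by
  constructor
  · rintro ⟨-, hinj⟩ N hN
    obtain ⟨M, hM, rfl⟩ := hZ.exists_isMaxClosedIdealSet_centralTrace_eq N
    refine ⟨M, ⟨hM, (closedIdealGen_center_subset_iff hM.1 _).2 le_rfl⟩, fun M' ⟨hM', hsub⟩ ↦ ?_⟩
    have hle := (closedIdealGen_center_subset_iff hM'.1 _).1 hsub
    exact hinj M' M hM' hM
      ((hM'.1.1.centralTrace_eq_iff hM.1.1).1 (hN.eq_of_le hM'.centralTrace_ne_top hle).symm)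
  · refine fun hunique ↦ ⟨fun M hM hcenter ↦ hM.one_notMem (hcenter fun a ↦ by simp),
      fun M M' hM hM' hinter ↦ ?_⟩
    have htrace := (hM.1.1.centralTrace_eq_iff (𝕜 := 𝕜) hM'.1.1).2 hinter
    exact (hunique _ (hZ.isMaximal_centralTrace hM)).unique
      ⟨hM, (closedIdealGen_center_subset_iff hM.1 _).2 le_rfl⟩
      ⟨hM', (closedIdealGen_center_subset_iff hM'.1 _).2 htrace.le⟩

/-- **Weak centrality via quotients by ideals generated by maximal ideals of the center.**
A unital C*-algebra `A` is weakly central iff for every maximal ideal `N` of the center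
`Z(A)`, the quotient of `A` by the closed two-sided ideal `⟨N⟩` generated by `N` has
exactly one maximal closed two-sided ideal; by the ideal correspondence for quotients,
the latter is expressed as: there is exactly one maximal closed two-sided ideal of `A`
containing `⟨N⟩`. -/
theorem weaklyCentral_iff_quotient_by_central_maximal_has_unique_maximal
    {A : Type*} [NormedRing A] [StarRing A] [CStarRing A]
    [NormedAlgebra ℂ A] [StarModule ℂ A] [CompleteSpace A] :
    WeaklyCentral A ↔
      ∀ N : Ideal (Subalgebra.center ℂ A), N.IsMaximal →
        ∃! M : Set A, IsMaxClosedIdealSet M ∧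
          closedIdealGen ((fun z : Subalgebra.center ℂ A => (z : A)) ''
            (N : Set (Subalgebra.center ℂ A))) ⊆ M := by
  let _ : CStarAlgebra A := {}
  have : IsOpenUnits A := ⟨Units.isOpenEmbedding_val⟩
  exact weaklyCentral_iff_quotient_by_central_maximal_has_unique_maximal_general
    (isStronglyRegular_center A)
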